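/- Let 0 ≤ α < 1, β ∈ (−π/2, π/2), λ ≥ 1, and let f ∈ Σ with inverse extension g satisfy Re(e^{iβ}((1−λ)f(z)/z + λ f'(z))) > α·cos β for all z ∈ U \ {0} and Re(e^{iβ}((1−λ)g(w)/w + λ g'(w))) > α·cos β for all w ∈ U \ {0}. Then |a₂| ≤ √(2(1−α)cos β / (2λ+1)) and |a₃| ≤ 2(1−α)cos β / (2λ+1), where a₂ = f''(0)/2 and a₃ = f'''(0)/6. -/

import Mathlib

open Metric Real Complex

/-!
If `h` has nonnegative real part on the disc of radius `R` about `c`, its Taylor coefficients of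
order `n ≥ 1` are bounded by `2 Re h(c) / Rⁿ`: Cauchy's formula represents the `n`-th coefficient as
the circle average of `(z - c)⁻ⁿ h(z)`, and with the conjugate of `h` in place of `h` this average
is `0`, so that `h` may be replaced by `2 Re h`, whose average is `2 Re h(c)`. The `n`-th
coefficient of `(1 - λ) f(z)/z + λ f'(z)` is `(nλ + 1) aₙ₊₁`, so this bounds the third coefficients
`a₃` of `f` and `b₃` of `g`. Differentiating `f ∘ g = id` three times gives `a₃ + b₃ = 2 a₂²`,
whence the bound on `a₂`.
-/

section Caratheodory

open scoped ComplexConjugate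

theorem norm_circleAverage_le_circleAverage_norm {E : Type*} [NormedAddCommGroup E]
    [NormedSpace ℝ E] (f : ℂ → E) (c : ℂ) (R : ℝ) :
    ‖circleAverage f c R‖ ≤ circleAverage (fun z ↦ ‖f z‖) c R := by
  simp only [circleAverage_def, norm_smul, smul_eq_mul, norm_inv, Real.norm_of_nonneg two_pi_pos.le]
  gcongr
  exact intervalIntegral.norm_integral_le_integral_norm two_pi_pos.le

variable {h : ℂ → ℂ} {c : ℂ} {R : ℝ}

theorem circleAverage_inv_pow_mul_eq_iteratedDeriv (hR : 0 < R)
    (hh : DiffContOnCl ℂ h (ball c R)) (n : ℕ) :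
    circleAverage (fun z ↦ ((z - c) ^ n)⁻¹ * h z) c R = iteratedDeriv n h c / n.factorial := by
  have cauchy := hh.circleIntegral_one_div_sub_center_pow_smul hR n
  simp only [smul_eq_mul, one_div, pow_succ', mul_inv, mul_assoc] at cauchy
  rw [circleAverage_eq_circleIntegral hR.ne']
  simp only [smul_eq_mul, cauchy]
  field [Real.pi_ne_zero, n.factorial_ne_zero]

theorem circleAverage_inv_pow_mul_conj_eq_zero (hR : 0 < R)
    (hh : DiffContOnCl ℂ h (ball c R)) {n : ℕ} (hn : n ≠ 0) :
    circleAverage (fun z ↦ ((z - c) ^ n)⁻¹ * conj (h z)) c R = 0 := by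
  have hpow : DiffContOnCl ℂ (fun z ↦ (z - c) ^ n * h z) (ball c R) :=
    (show Differentiable ℂ fun z ↦ (z - c) ^ n by fun_prop).diffContOnCl.smul hh
  have hint : CircleIntegrable (fun z ↦ (z - c) ^ n * h z) c R :=
    (hpow.continuousOn_ball.mono sphere_subset_closedBall).circleIntegrable hR.le
  have havg : circleAverage (fun z ↦ (z - c) ^ n * h z) c R = 0 := by
    rw [← abs_of_pos hR] at hpow
    simp [hpow.circleAverage, hn]
  -- On the circle `(z - c)⁻¹ = conj (z - c) / R ^ 2`.
  have hinv : Set.EqOn (fun z ↦ ((z - c) ^ n)⁻¹ * conj (h z))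
      (fun z ↦ ((R : ℂ) ^ 2)⁻¹ ^ n • ((conjCLE : ℂ →L[ℝ] ℂ) ∘ fun z ↦ (z - c) ^ n * h z) z)
      (sphere c |R|) := by
    intro z hz
    rw [abs_of_pos hR, mem_sphere_iff_norm] at hz
    simp only [← inv_pow, Complex.inv_def (z - c), map_sub, normSq_eq_norm_sq, hz, ofReal_pow,
      ofReal_inv, mul_pow, ContinuousLinearEquiv.coe_coe, ContinuousAlgEquiv.coe_coeCLE,
      Function.comp_apply, conjCAE_apply, map_mul, map_pow, smul_eq_mul]
    ring
  rw [circleAverage_congr_sphere hinv, circleAverage_fun_smul,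
    (conjCLE : ℂ →L[ℝ] ℂ).circleAverage_comp_comm hint, havg, map_zero, smul_zero]

theorem circleAverage_inv_pow_mul_two_mul_re_eq_iteratedDeriv (hR : 0 < R)
    (hh : DiffContOnCl ℂ h (ball c R)) {n : ℕ} (hn : n ≠ 0) :
    circleAverage (fun z ↦ ((z - c) ^ n)⁻¹ * (2 * (h z).re : ℝ)) c R =
      iteratedDeriv n h c / n.factorial := by
  have hcont : ContinuousOn h (sphere c R) :=
    hh.continuousOn_ball.mono sphere_subset_closedBall
  have hpow : ContinuousOn (fun z ↦ ((z - c) ^ n)⁻¹) (sphere c R) :=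
    ContinuousOn.inv₀ (by fun_prop) fun z hz ↦
      pow_ne_zero n (sub_ne_zero.2 (ne_of_mem_sphere hz hR.ne'))
  have hint : CircleIntegrable (fun z ↦ ((z - c) ^ n)⁻¹ * h z) c R :=
    (hpow.mul hcont).circleIntegrable hR.le
  have hint_conj : CircleIntegrable (fun z ↦ ((z - c) ^ n)⁻¹ * conj (h z)) c R :=
    (hpow.mul (continuous_conj.comp_continuousOn hcont)).circleIntegrable hR.le
  simp only [← add_conj, mul_add]
  rw [circleAverage_fun_add hint hint_conj,
    circleAverage_inv_pow_mul_eq_iteratedDeriv hR hh,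
    circleAverage_inv_pow_mul_conj_eq_zero hR hh hn, add_zero]

theorem circleAverage_re_eq (hR : 0 < R) (hh : DiffContOnCl ℂ h (ball c R)) :
    circleAverage (fun z ↦ (h z).re) c R = (h c).re := by
  have hint : CircleIntegrable h c R :=
    (hh.continuousOn_ball.mono sphere_subset_closedBall).circleIntegrable hR.le
  rw [← abs_of_pos hR] at hh
  rw [← hh.circleAverage]
  exact reCLM.circleAverage_comp_comm hint

theorem norm_iteratedDeriv_mul_pow_le_of_sphere_re_nonneg (hR : 0 < R)
    (hh : DiffContOnCl ℂ h (ball c R)) (hre : ∀ z ∈ sphere c R, 0 ≤ (h z).re)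
    {n : ℕ} (hn : n ≠ 0) :
    ‖iteratedDeriv n h c / n.factorial‖ * R ^ n ≤ 2 * (h c).re := by
  have hnorm : Set.EqOn (fun z ↦ ‖((z - c) ^ n)⁻¹ * (2 * (h z).re : ℝ)‖)
      (fun z ↦ (2 * (R ^ n)⁻¹) • (h z).re) (sphere c |R|) := by
    intro z hz
    rw [abs_of_pos hR] at hz
    simp only [ofReal_mul, ofReal_ofNat, Complex.norm_mul, norm_inv, norm_pow,
      mem_sphere_iff_norm.1 hz, Complex.norm_ofNat, norm_real, norm_eq_abs,
      abs_of_nonneg (hre z hz), smul_eq_mul]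
    ring
  rw [← le_div_iff₀ (pow_pos hR n)]
  calc ‖iteratedDeriv n h c / n.factorial‖
      = ‖circleAverage (fun z ↦ ((z - c) ^ n)⁻¹ * (2 * (h z).re : ℝ)) c R‖ := by
        rw [circleAverage_inv_pow_mul_two_mul_re_eq_iteratedDeriv hR hh hn]
    _ ≤ circleAverage (fun z ↦ ‖((z - c) ^ n)⁻¹ * (2 * (h z).re : ℝ)‖) c R :=
        norm_circleAverage_le_circleAverage_norm _ c R
    _ = 2 * (h c).re / R ^ n := by
        rw [circleAverage_congr_sphere hnorm, circleAverage_fun_smul, circleAverage_re_eq hR hh,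
          smul_eq_mul]
        ring

theorem norm_iteratedDeriv_mul_pow_le_of_re_nonneg (hR : 0 < R)
    (hh : DifferentiableOn ℂ h (ball c R)) (hre : ∀ z ∈ ball c R, z ≠ c → 0 ≤ (h z).re)
    {n : ℕ} (hn : n ≠ 0) :
    ‖iteratedDeriv n h c / n.factorial‖ * R ^ n ≤ 2 * (h c).re := by
  have hlim : Filter.Tendsto (fun r : ℝ ↦ ‖iteratedDeriv n h c / n.factorial‖ * r ^ n)
      (nhdsWithin R (Set.Iio R)) (nhds (‖iteratedDeriv n h c / n.factorial‖ * R ^ n)) :=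
    (Continuous.tendsto (by fun_prop) R).mono_left nhdsWithin_le_nhds
  refine le_of_tendsto hlim ?_
  filter_upwards [Ioo_mem_nhdsLT hR] with r hr
  refine norm_iteratedDeriv_mul_pow_le_of_sphere_re_nonneg hr.1 ?_ ?_ hn
  · exact (hh.mono (closedBall_subset_ball hr.2)).diffContOnCl_ball subset_rfl
  · exact fun z hz ↦ hre z (sphere_subset_ball hr.2 hz) (ne_of_mem_sphere hz hr.1.ne')

end Caratheodory

section InverseFunction

variable {𝕜 : Type*} [NontriviallyNormedField 𝕜] {f g : 𝕜 → 𝕜} {x : 𝕜}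

theorem deriv_mul_deriv_of_comp_eventuallyEq_id (hf : DifferentiableAt 𝕜 f (g x))
    (hg : DifferentiableAt 𝕜 g x) (hfg : f ∘ g =ᶠ[nhds x] id) :
    deriv f (g x) * deriv g x = 1 := by
  rw [← deriv_comp x hf hg, hfg.deriv_eq, deriv_id]

theorem deriv_pow_three_mul_iteratedDeriv_two_of_comp_eventuallyEq_id
    (hf : ContDiffAt 𝕜 2 f (g x)) (hg : ContDiffAt 𝕜 2 g x) (hfg : f ∘ g =ᶠ[nhds x] id) :
    deriv f (g x) ^ 3 * iteratedDeriv 2 g x = -iteratedDeriv 2 f (g x) := by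
  have first := deriv_mul_deriv_of_comp_eventuallyEq_id (hf.differentiableAt two_ne_zero)
    (hg.differentiableAt two_ne_zero) hfg
  have second : iteratedDeriv 2 f (g x) * deriv g x ^ 2 +
      deriv f (g x) * iteratedDeriv 2 g x = 0 := by
    rw [← iteratedDeriv_comp_two hf hg, hfg.iteratedDeriv_eq, iteratedDeriv_id]
    simp
  linear_combination deriv f (g x) ^ 2 * second -
    iteratedDeriv 2 f (g x) * (deriv f (g x) * deriv g x + 1) * first

theorem deriv_pow_five_mul_iteratedDeriv_three_of_comp_eventuallyEq_id
    (hf : ContDiffAt 𝕜 3 f (g x)) (hg : ContDiffAt 𝕜 3 g x) (hfg : f ∘ g =ᶠ[nhds x] id) :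
    deriv f (g x) ^ 5 * iteratedDeriv 3 g x =
      3 * iteratedDeriv 2 f (g x) ^ 2 - deriv f (g x) * iteratedDeriv 3 f (g x) := by
  have first := deriv_mul_deriv_of_comp_eventuallyEq_id (hf.differentiableAt three_ne_zero)
    (hg.differentiableAt three_ne_zero) hfg
  have second := deriv_pow_three_mul_iteratedDeriv_two_of_comp_eventuallyEq_id
    (hf.of_le (by norm_num)) (hg.of_le (by norm_num)) hfg
  have third : iteratedDeriv 3 f (g x) * deriv g x ^ 3 +
      3 * iteratedDeriv 2 f (g x) * iteratedDeriv 2 g x * deriv g x +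
      deriv f (g x) * iteratedDeriv 3 g x = 0 := by
    rw [← iteratedDeriv_comp_three hf hg, hfg.iteratedDeriv_eq, iteratedDeriv_id]
    simp
  set p := deriv f (g x)
  set q := deriv g x
  linear_combination p ^ 4 * third - 3 * iteratedDeriv 2 f (g x) * second -
    (p * iteratedDeriv 3 f (g x) * (p ^ 2 * q ^ 2 + p * q + 1) +
      3 * iteratedDeriv 2 f (g x) * iteratedDeriv 2 g x * p ^ 3) * first

end InverseFunction

section SlopeDeriv

theorem iteratedDeriv_dslope_same {𝕜 : Type*} [NontriviallyNormedField 𝕜] [CompleteSpace 𝕜]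
    [CharZero 𝕜] {f : 𝕜 → 𝕜} {c : 𝕜} (hf : AnalyticAt 𝕜 f c) (n : ℕ) :
    iteratedDeriv n (dslope f c) c = iteratedDeriv (n + 1) f c / (n + 1) := by
  have hslope := hf.hasFPowerSeriesAt.has_fpower_series_dslope_fslope
  have hcoeff := congrArg (fun p ↦ p.coeff n)
    (hslope.analyticAt.hasFPowerSeriesAt.eq_formalMultilinearSeries hslope)
  simp only [FormalMultilinearSeries.coeff_ofScalars, FormalMultilinearSeries.coeff_fslope,
    Nat.factorial_succ, Nat.cast_mul, Nat.cast_add_one] at hcoeff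
  have hfact : (n.factorial : 𝕜) ≠ 0 := mod_cast n.factorial_ne_zero
  have hsucc : (n + 1 : 𝕜) ≠ 0 := mod_cast n.succ_ne_zero
  field_simp at hcoeff ⊢
  exact hcoeff

/-- The function `(1 - λ) f(z)/z + λ f'(z)` whose values define the class `NP^{1,λ}_Σ(β,α)`. Using
`dslope` in place of the quotient removes the singularity at `0` when `f 0 = 0`. -/
noncomputable def slopeDerivCombination (lam : ℂ) (f : ℂ → ℂ) (z : ℂ) : ℂ :=
  (1 - lam) * dslope f 0 z + lam * deriv f z

variable {lam : ℂ} {f : ℂ → ℂ}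

theorem slopeDerivCombination_zero : slopeDerivCombination lam f 0 = deriv f 0 := by
  rw [slopeDerivCombination, dslope_same]
  ring

theorem slopeDerivCombination_of_ne (hf0 : f 0 = 0) {z : ℂ} (hz : z ≠ 0) :
    slopeDerivCombination lam f z = (1 - lam) * (f z / z) + lam * deriv f z := by
  simp [slopeDerivCombination, dslope_of_ne f hz, slope_def_field, hf0]

theorem differentiableOn_slopeDerivCombination {s : Set ℂ} (hs : s ∈ nhds 0)
    (hf : AnalyticOnNhd ℂ f s) : DifferentiableOn ℂ (slopeDerivCombination lam f) s :=
  (((differentiableOn_dslope hs).2 hf.differentiableOn).const_mul _).add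
    (hf.deriv.differentiableOn.const_mul _)

theorem iteratedDeriv_slopeDerivCombination_zero (hf : AnalyticAt ℂ f 0) (n : ℕ) :
    iteratedDeriv n (slopeDerivCombination lam f) 0 / n.factorial =
      (n * lam + 1) * (iteratedDeriv (n + 1) f 0 / (n + 1).factorial) := by
  have hslope : AnalyticAt ℂ (dslope f 0) 0 :=
    hf.hasFPowerSeriesAt.has_fpower_series_dslope_fslope.analyticAt
  have hfact : (n.factorial : ℂ) ≠ 0 := mod_cast n.factorial_ne_zero
  have hsucc : (n + 1 : ℂ) ≠ 0 := mod_cast n.succ_ne_zero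
  have hslope_smul : AnalyticAt ℂ (fun z ↦ (1 - lam) * dslope f 0 z) 0 :=
    analyticAt_const.mul hslope
  have hderiv_smul : AnalyticAt ℂ (fun z ↦ lam * deriv f z) 0 := analyticAt_const.mul hf.deriv
  unfold slopeDerivCombination
  rw [iteratedDeriv_fun_add hslope_smul.contDiffAt hderiv_smul.contDiffAt,
    iteratedDeriv_const_mul_field, iteratedDeriv_const_mul_field, iteratedDeriv_dslope_same hf,
    ← iteratedDeriv_succ', Nat.factorial_succ]
  push_cast
  field_simp
  ring

theorem norm_mul_norm_iteratedDeriv_mul_pow_le_of_le_re {R : ℝ} (hR : 0 < R)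
    (hf : AnalyticOnNhd ℂ f (ball 0 R)) (hf0 : f 0 = 0) {u : ℂ} {ρ : ℝ}
    (hre : ∀ z ∈ ball (0 : ℂ) R, z ≠ 0 → ρ ≤ (u * ((1 - lam) * (f z / z) + lam * deriv f z)).re)
    {n : ℕ} (hn : n ≠ 0) :
    ‖u‖ * ‖n * lam + 1‖ * ‖iteratedDeriv (n + 1) f 0 / (n + 1).factorial‖ * R ^ n ≤
      2 * ((u * deriv f 0).re - ρ) := by
  have hdiff : DifferentiableOn ℂ (fun z ↦ -ρ + u * slopeDerivCombination lam f z) (ball 0 R) :=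
    ((differentiableOn_slopeDerivCombination (ball_mem_nhds 0 hR) hf).const_mul u).const_add _
  have hnonneg : ∀ z ∈ ball (0 : ℂ) R, z ≠ 0 → 0 ≤ (-ρ + u * slopeDerivCombination lam f z).re := by
    intro z hz hz0
    rw [slopeDerivCombination_of_ne hf0 hz0, add_re, neg_re, ofReal_re]
    linarith [hre z hz hz0]
  have hcoeff : iteratedDeriv n (fun z ↦ -ρ + u * slopeDerivCombination lam f z) 0 / n.factorial =
      u * ((n * lam + 1) * (iteratedDeriv (n + 1) f 0 / (n + 1).factorial)) := by
    rw [← iteratedDeriv_slopeDerivCombination_zero (hf 0 (mem_ball_self hR)),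
      iteratedDeriv_const_add (Nat.pos_of_ne_zero hn), iteratedDeriv_const_mul_field,
      mul_div_assoc]
  have hbound := norm_iteratedDeriv_mul_pow_le_of_re_nonneg hR hdiff hnonneg hn
  rwa [hcoeff, slopeDerivCombination_zero, norm_mul, norm_mul, ← mul_assoc, add_re, neg_re,
    ofReal_re, neg_add_eq_sub] at hbound

theorem norm_iteratedDeriv_div_factorial_le_of_lt_re_exp_mul
    (hf : AnalyticOnNhd ℂ f (ball 0 1)) (hf0 : f 0 = 0) (hf1 : deriv f 0 = 1) {α β : ℝ}
    (hre : ∀ z ∈ ball (0 : ℂ) 1, z ≠ 0 → α * Real.cos β <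
      (Complex.exp (I * β) * ((1 - lam) * (f z / z) + lam * deriv f z)).re)
    {n : ℕ} (hn : n ≠ 0) (hlam : n * lam + 1 ≠ 0) :
    ‖iteratedDeriv (n + 1) f 0 / (n + 1).factorial‖ ≤
      2 * (1 - α) * Real.cos β / ‖n * lam + 1‖ := by
  have hbound := norm_mul_norm_iteratedDeriv_mul_pow_le_of_le_re one_pos hf hf0
    (fun z hz hz0 ↦ (hre z hz hz0).le) hn
  rw [hf1, mul_one, mul_comm I, norm_exp_ofReal_mul_I, exp_ofReal_mul_I_re, one_pow, mul_one,
    one_mul] at hbound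
  rw [le_div_iff₀ (norm_pos_iff.2 hlam)]
  linarith

end SlopeDeriv

theorem coeff_bounds_NP_lambda_general
    (α β : ℝ) (lam : ℂ) (hlam : 2 * lam + 1 ≠ 0) (f g : ℂ → ℂ)
    (hf_an : AnalyticOnNhd ℂ f (ball 0 1)) (hf0 : f 0 = 0) (hf1 : deriv f 0 = 1)
    (hg_an : AnalyticOnNhd ℂ g (ball 0 1))
    (hg0 : g 0 = 0) (hfg : ∀ᶠ w in nhds (0 : ℂ), f (g w) = w)
    (hre_f : ∀ z ∈ ball (0 : ℂ) 1, z ≠ 0 →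
      α * Real.cos β <
        (Complex.exp (Complex.I * β) * ((1 - lam) * (f z / z) + lam * deriv f z)).re)
    (hre_g : ∀ w ∈ ball (0 : ℂ) 1, w ≠ 0 →
      α * Real.cos β <
        (Complex.exp (Complex.I * β) * ((1 - lam) * (g w / w) + lam * deriv g w)).re) :
    ‖iteratedDeriv 2 f 0 / 2‖ ≤ √(2 * (1 - α) * Real.cos β / ‖2 * lam + 1‖) ∧
    ‖iteratedDeriv 3 f 0 / 6‖ ≤ 2 * (1 - α) * Real.cos β / ‖2 * lam + 1‖ := by
  have hf_zero : AnalyticAt ℂ f (g 0) := by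
    simpa only [hg0] using hf_an 0 (mem_ball_self one_pos)
  have hg_zero : AnalyticAt ℂ g 0 := hg_an 0 (mem_ball_self one_pos)
  have hg1 : deriv g 0 = 1 := by
    simpa [hg0, hf1] using deriv_mul_deriv_of_comp_eventuallyEq_id
      hf_zero.differentiableAt hg_zero.differentiableAt hfg
  have hthird : iteratedDeriv 3 g 0 = 3 * iteratedDeriv 2 f 0 ^ 2 - iteratedDeriv 3 f 0 := by
    simpa [hg0, hf1] using deriv_pow_five_mul_iteratedDeriv_three_of_comp_eventuallyEq_id
      hf_zero.contDiffAt hg_zero.contDiffAt hfg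
  have hf3 : ‖iteratedDeriv 3 f 0 / 6‖ ≤ 2 * (1 - α) * Real.cos β / ‖2 * lam + 1‖ :=
    norm_iteratedDeriv_div_factorial_le_of_lt_re_exp_mul hf_an hf0 hf1 hre_f two_ne_zero hlam
  have hg3 : ‖iteratedDeriv 3 g 0 / 6‖ ≤ 2 * (1 - α) * Real.cos β / ‖2 * lam + 1‖ :=
    norm_iteratedDeriv_div_factorial_le_of_lt_re_exp_mul hg_an hg0 hg1 hre_g two_ne_zero hlam
  refine ⟨Real.le_sqrt_of_sq_le ?_, hf3⟩
  calc ‖iteratedDeriv 2 f 0 / 2‖ ^ 2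
      = ‖iteratedDeriv 3 f 0 / 6 + iteratedDeriv 3 g 0 / 6‖ / 2 := by
        rw [hthird, ← norm_pow, ← Complex.norm_two, ← norm_div]
        ring_nf
    _ ≤ (‖iteratedDeriv 3 f 0 / 6‖ + ‖iteratedDeriv 3 g 0 / 6‖) / 2 := by
        gcongr
        exact norm_add_le _ _
    _ ≤ 2 * (1 - α) * Real.cos β / ‖2 * lam + 1‖ := by linarith

/-- Coefficient bounds for the class `NP^{1,λ}_Σ(β,α)`. -/
theorem coeff_bounds_NP_lambda
    (α β lam : ℝ) (hα0 : 0 ≤ α) (hα1 : α < 1)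
    (hβ : β ∈ Set.Ioo (-(π / 2)) (π / 2)) (hlam : 1 ≤ lam)
    (f g : ℂ → ℂ)
    -- `f` is bi-univalent with inverse extension `g`.
    (hf_an : AnalyticOnNhd ℂ f (ball 0 1)) (hf0 : f 0 = 0) (hf1 : deriv f 0 = 1)
    (hf_inj : Set.InjOn f (ball 0 1))
    (hg_an : AnalyticOnNhd ℂ g (ball 0 1)) (hg_inj : Set.InjOn g (ball 0 1))
    (hg0 : g 0 = 0) (hfg : ∀ᶠ w in nhds (0 : ℂ), f (g w) = w)
    -- real-part condition for `f`
    (hre_f : ∀ z ∈ ball (0 : ℂ) 1, z ≠ 0 →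
      α * Real.cos β <
        (Complex.exp (Complex.I * β) *
          ((1 - (lam : ℂ)) * (f z / z) + (lam : ℂ) * deriv f z)).re)
    -- real-part condition for `g`
    (hre_g : ∀ w ∈ ball (0 : ℂ) 1, w ≠ 0 →
      α * Real.cos β <
        (Complex.exp (Complex.I * β) *
          ((1 - (lam : ℂ)) * (g w / w) + (lam : ℂ) * deriv g w)).re) :
    ‖iteratedDeriv 2 f 0 / 2‖ ≤
        Real.sqrt (2 * (1 - α) * Real.cos β / (2 * lam + 1)) ∧
    ‖iteratedDeriv 3 f 0 / 6‖ ≤ 2 * (1 - α) * Real.cos β / (2 * lam + 1) := by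
  have hnorm : ‖2 * (lam : ℂ) + 1‖ = 2 * lam + 1 := by
    exact_mod_cast Real.norm_of_nonneg (show 0 ≤ 2 * lam + 1 by linarith)
  simpa only [hnorm] using coeff_bounds_NP_lambda_general α β lam
    (norm_pos_iff.1 (by linarith)) f g hf_an hf0 hf1 hg_an hg0 hfg hre_f hre_g
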